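/- Let C be the binary relation on ℤ × ℤ defined by C (x, y) (x', y') ↔ x = 100 ∧ 1 < x' ∧ x' ≤ 100 ∧ y' = y + 1 (the composition of τ_{x=100}, τ_{x<100}, and the accelerated inner loop in the running example). Then for all (x, y), (x', y') ∈ ℤ × ℤ: Relation.TransGen C (x, y) (x', y') holds if and only if x = 100, 1 < x' ≤ 100, and there exists an integer n > 0 with y' = y + n. (Correctness of the accelerated outer loop τ_o⁺.) -/

import Mathlib

theorem aux_fwd (p q : ℤ × ℤ)
    (h : Relation.TransGen
        (fun p q : ℤ × ℤ => p.1 = 100 ∧ 1 < q.1 ∧ q.1 ≤ 100 ∧ q.2 = p.2 + 1) p q) :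
    p.1 = 100 ∧ 1 < q.1 ∧ q.1 ≤ 100 ∧ p.2 < q.2 := by
  induction h with
  | single h => obtain ⟨h1, h2, h3, h4⟩ := h; exact ⟨h1, h2, h3, by omega⟩
  | tail _ h ih =>
    obtain ⟨h1, h2, h3, h4⟩ := h
    obtain ⟨i1, i2, i3, i4⟩ := ih
    exact ⟨i1, h2, h3, by omega⟩

theorem aux_bwd (k : ℕ) : ∀ (y x' : ℤ), 1 < x' → x' ≤ 100 →
    Relation.TransGen
        (fun p q : ℤ × ℤ => p.1 = 100 ∧ 1 < q.1 ∧ q.1 ≤ 100 ∧ q.2 = p.2 + 1)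
        (100, y) (x', y + (k + 1)) := by
  induction k with
  | zero => intro y x' h1 h2; exact .single ⟨rfl, h1, h2, by simp⟩
  | succ k ih =>
    intro y x' h1 h2
    refine .tail (ih y 100 (by norm_num) le_rfl) ⟨rfl, h1, h2, ?_⟩
    push_cast
    ring

theorem stmt_1 :
    ∀ x y x' y' : ℤ,
      Relation.TransGen
        (fun p q : ℤ × ℤ => p.1 = 100 ∧ 1 < q.1 ∧ q.1 ≤ 100 ∧ q.2 = p.2 + 1)
        (x, y) (x', y') ↔
      (x = 100 ∧ 1 < x' ∧ x' ≤ 100 ∧ ∃ n : ℤ, n > 0 ∧ y' = y + n) := by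
  intro x y x' y'
  constructor
  · intro h
    obtain ⟨h1, h2, h3, h4⟩ := aux_fwd _ _ h
    simp only at h1 h2 h3 h4
    exact ⟨h1, h2, h3, y' - y, by omega, by omega⟩
  · rintro ⟨rfl, h2, h3, n, hn, rfl⟩
    have h := aux_bwd (n - 1).toNat y x' h2 h3
    have e : (((n - 1).toNat : ℤ) + 1) = n := by omega
    rw [e] at h
    exact h
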